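/- Let g be a positive integer, τ ∈ ℍ_g, k', k'' positive integers, c', d', c'', d'' ∈ ℝ^g, and z', z'' ∈ ℂ^g. Then ϑ[c'/k', d'](k'τ, z') · ϑ[c''/k'', d''](k''τ, z'') = Σ_{w ∈ {0,…,k'+k''−1}^g} ϑ[(k'k''w + k''c' − k'c'')/(k'k''(k'+k'')), k''d' − k'd''](k'k''(k'+k'')τ, k''z' − k'z'') · ϑ[(k'w + c' + c'')/(k'+k''), d' + d'']((k'+k'')τ, z' + z''). (The general multiplication formula for shifted theta functions.) -/

import Mathlib

open Complex Matrix BigOperators Real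

noncomputable section

/-- The quadratic form `vᵀ τ v = ∑_{j,k} τ_{jk} v_j v_k`. -/
def qf {g : ℕ} (τ : Matrix (Fin g) (Fin g) ℂ) (v : Fin g → ℂ) : ℂ :=
  ∑ j, ∑ k, v j * τ j k * v k

/-- The pairing `vᵀ w = ∑_j v_j w_j`. -/
def dotc {g : ℕ} (v w : Fin g → ℂ) : ℂ := ∑ j, v j * w j

/-- The Siegel upper half space `ℍ_g`. -/
def Siegel (g : ℕ) : Set (Matrix (Fin g) (Fin g) ℂ) :=
  {τ | τ.IsSymm ∧ (τ.map Complex.im).PosDef}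

/-- The shifted Riemann theta function
`ϑ[c,d](τ,z) = ∑_{n ∈ ℤ^g} exp(πi·(n+c)ᵀτ(n+c) + 2πi·(n+c)ᵀ(z+d))`. -/
def thetaS {g : ℕ} (c d : Fin g → ℝ) (τ : Matrix (Fin g) (Fin g) ℂ)
    (z : Fin g → ℂ) : ℂ :=
  ∑' n : Fin g → ℤ,
    Complex.exp ((π : ℂ) * I * qf τ (fun j => (n j : ℂ) + (c j : ℂ)) +
      2 * (π : ℂ) * I * dotc (fun j => (n j : ℂ) + (c j : ℂ)) (z + fun j => (d j : ℂ)))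

lemma summable_pi_prod : ∀ (g : ℕ) (h : Fin g → ℤ → ℝ), (∀ j n, 0 ≤ h j n) →
    (∀ j, Summable (h j)) → Summable (fun n : Fin g → ℤ => ∏ j, h j (n j)) := by
  intro g
  induction g with
  | zero => intro h _ _; exact Summable.of_finite
  | succ g ih =>
    intro h h0 hs
    have h1 := ih (fun j => h j.succ) (fun j => h0 j.succ) (fun j => hs j.succ)
    have h2 := (hs 0).mul_of_nonneg h1 (fun n => h0 0 n)
      (fun n => Finset.prod_nonneg fun j _ => h0 j.succ _)
    rw [← (Fin.consEquiv (fun _ : Fin (g+1) => ℤ)).summable_iff]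
    refine h2.congr fun p => ?_
    simp [Fin.consEquiv, Fin.prod_univ_succ]

lemma summable_gauss (ε c y : ℝ) (hε : 0 < ε) :
    Summable (fun n : ℤ => Real.exp (-π * ε * (n + c)^2 - 2 * π * (n + c) * y)) := by
  have h := ((summable_jacobiTheta₂_term_iff (I * ((ε * c + y : ℝ) : ℂ)) (I * (ε : ℂ))).2
    (by simpa using hε)).norm.mul_left (Real.exp (-π * ε * c^2 - 2 * π * c * y))
  refine h.congr fun n => ?_
  rw [jacobiTheta₂_term, Complex.norm_exp, ← Real.exp_add]
  congr 1
  have : (2 * (π : ℂ) * I * n * (I * ((ε * c + y : ℝ) : ℂ)) + π * I * n ^ 2 * (I * (ε : ℂ)))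
      = ((-(2 * π * n * (ε * c + y)) - π * n^2 * ε : ℝ) : ℂ) := by
    push_cast
    linear_combination (2 * (π : ℂ) * n * (ε * c + y) + π * n^2 * ε) * I_sq
  rw [this, Complex.ofReal_re]
  ring

lemma posdef_coercive {g : ℕ} (Y : Matrix (Fin g) (Fin g) ℝ) (hY : Y.PosDef) :
    ∃ ε > 0, ∀ x : Fin g → ℝ, ε * ∑ j, x j ^ 2 ≤ ∑ j, ∑ k, x j * Y j k * x k := by
  have hpos : ∀ x : Fin g → ℝ, x ≠ 0 → 0 < ∑ j, ∑ k, x j * Y j k * x k := by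
    intro x hx
    have := hY.dotProduct_mulVec_pos hx
    simpa [dotProduct, mulVec, Finset.mul_sum, mul_assoc] using this
  let q : EuclideanSpace ℝ (Fin g) → ℝ := fun x => ∑ j, ∑ k, x j * Y j k * x k
  have hq : Continuous q := by fun_prop
  rcases (Metric.sphere (0 : EuclideanSpace ℝ (Fin g)) 1).eq_empty_or_nonempty with he | hne
  · refine ⟨1, one_pos, fun x => ?_⟩
    by_cases hx : x = 0
    · simp [hx]
    exfalso
    have hx' : WithLp.toLp 2 x ≠ 0 := by simpa using hx
    have : (‖WithLp.toLp 2 x‖⁻¹ • WithLp.toLp 2 x) ∈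
        Metric.sphere (0 : EuclideanSpace ℝ (Fin g)) 1 := by
      simp [norm_smul, norm_ne_zero_iff.2 hx']
    simp [he] at this
  · obtain ⟨u, hu, hmin⟩ := (isCompact_sphere _ _).exists_isMinOn hne hq.continuousOn
    have hu0 : u ≠ 0 := by
      rintro rfl
      simp at hu
    refine ⟨q u, hpos _ (by simpa using hu0), fun x => ?_⟩
    by_cases hx : x = 0
    · simp [hx]
    have hx' : WithLp.toLp 2 x ≠ 0 := by simpa using hx
    have hn := norm_ne_zero_iff.2 hx'
    set r := ‖WithLp.toLp 2 x‖ with hr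
    have hmem : (r⁻¹ • WithLp.toLp 2 x) ∈
        Metric.sphere (0 : EuclideanSpace ℝ (Fin g)) 1 := by
      simp only [mem_sphere_iff_norm, sub_zero, norm_smul, ← hr, norm_inv, Real.norm_eq_abs]
      rw [abs_of_nonneg (hr ▸ norm_nonneg _), inv_mul_cancel₀ hn]
    have h1 : q u ≤ q (r⁻¹ • WithLp.toLp 2 x) := hmin hmem
    have h2 : q (r⁻¹ • WithLp.toLp 2 x) = (r^2)⁻¹ * ∑ j, ∑ k, x j * Y j k * x k := by
      simp only [q, Finset.mul_sum]
      refine Finset.sum_congr rfl fun j _ => Finset.sum_congr rfl fun k _ => ?_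
      simp
      ring
    have h3 : ∑ j, x j ^ 2 = r ^ 2 := by
      rw [hr, EuclideanSpace.real_norm_sq_eq]
    rw [h3]
    rw [h2] at h1
    have hr2 : 0 < r ^ 2 := by positivity
    calc q u * r^2 ≤ ((r^2)⁻¹ * ∑ j, ∑ k, x j * Y j k * x k) * r^2 := by gcongr
      _ = _ := by field_simp

/-- The general term of the theta series. -/
def thT {g : ℕ} (c d : Fin g → ℝ) (τ : Matrix (Fin g) (Fin g) ℂ)
    (z : Fin g → ℂ) (n : Fin g → ℤ) : ℂ :=
    Complex.exp ((π : ℂ) * I * qf τ (fun j => (n j : ℂ) + (c j : ℂ)) +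
      2 * (π : ℂ) * I * dotc (fun j => (n j : ℂ) + (c j : ℂ)) (z + fun j => (d j : ℂ)))

lemma thT_summable {g : ℕ} (c d : Fin g → ℝ) (τ : Matrix (Fin g) (Fin g) ℂ)
    (z : Fin g → ℂ) (hτ : τ ∈ Siegel g) : Summable (fun n => ‖thT c d τ z n‖) := by
  obtain ⟨ε, hε, hco⟩ := posdef_coercive _ hτ.2
  refine Summable.of_nonneg_of_le (fun _ => norm_nonneg _) (fun n => ?_)
    (summable_pi_prod g
      (fun j n => Real.exp (-π * ε * (n + c j)^2 - 2 * π * (n + c j) * (z j).im))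
      (fun _ _ => (Real.exp_pos _).le) (fun j => summable_gauss ε (c j) (z j).im hε))
  rw [thT, Complex.norm_exp, ← Real.exp_sum, Real.exp_le_exp]
  have h := hco (fun j => n j + c j)
  have e1 : ((π : ℂ) * I * qf τ (fun j => (n j : ℂ) + (c j : ℂ))).re =
      -π * ∑ j, ∑ k, (n j + c j) * (τ.map Complex.im) j k * (n k + c k) := by
    have : (qf τ (fun j => (n j : ℂ) + (c j : ℂ))).im =
        ∑ j, ∑ k, (n j + c j) * (τ.map Complex.im) j k * (n k + c k) := by
      simp [qf, Complex.im_sum]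
    rw [← this]
    simp
  have e2 : (2 * (π : ℂ) * I * dotc (fun j => (n j : ℂ) + (c j : ℂ))
      (z + fun j => (d j : ℂ))).re = -2 * π * ∑ j, (n j + c j) * (z j).im := by
    have : (dotc (fun j => (n j : ℂ) + (c j : ℂ)) (z + fun j => (d j : ℂ))).im
        = ∑ j, (n j + c j) * (z j).im := by
      simp [dotc, Complex.im_sum]
    rw [← this]
    simp
  rw [Complex.add_re, e1, e2]
  have e3 : ∑ j, (-π * ε * (n j + c j)^2 - 2 * π * (n j + c j) * (z j).im)
      = -π * (ε * ∑ j, ((n j : ℝ) + c j)^2) + -2 * π * ∑ j, (n j + c j) * (z j).im := by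
    simp only [Finset.mul_sum, ← Finset.sum_add_distrib]
    exact Finset.sum_congr rfl fun j _ => by ring
  rw [e3]
  have := mul_le_mul_of_nonneg_left h Real.pi_pos.le
  linarith

lemma siegel_smul {g : ℕ} {τ : Matrix (Fin g) (Fin g) ℂ} (hτ : τ ∈ Siegel g) (a : ℂ) (k : ℕ)
    (hk : 0 < k) (ha : a = k) : a • τ ∈ Siegel g := by
  subst ha
  refine ⟨hτ.1.smul _, ?_⟩
  have : ((k : ℂ) • τ).map Complex.im = (k : ℝ) • τ.map Complex.im := by
    ext i j
    simp
  rw [this]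
  exact hτ.2.smul (by positivity)

/-- Reindexing of pairs of lattice points. -/
def latEquiv (g k' k'' : ℕ) (hk : 0 < k' + k'') :
    (Fin g → Fin (k' + k'')) × ((Fin g → ℤ) × (Fin g → ℤ)) ≃ (Fin g → ℤ) × (Fin g → ℤ) where
  toFun p := (fun j => p.2.2 j + k'' * p.2.1 j + ((p.1 j : ℕ) : ℤ),
    fun j => p.2.2 j - k' * p.2.1 j)
  invFun q := (fun j => ⟨((q.1 j - q.2 j) % ((k' + k'' : ℕ) : ℤ)).toNat, by
      have h1 := Int.emod_nonneg (q.1 j - q.2 j) (b := ((k' + k'' : ℕ) : ℤ)) (by omega)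
      have h2 := Int.emod_lt_of_pos (q.1 j - q.2 j) (b := ((k' + k'' : ℕ) : ℤ)) (by omega)
      omega⟩,
    (fun j => (q.1 j - q.2 j) / ((k' + k'' : ℕ) : ℤ),
     fun j => q.2 j + k' * ((q.1 j - q.2 j) / ((k' + k'' : ℕ) : ℤ))))
  left_inv := by
    rintro ⟨w, m, p⟩
    have e : ∀ j, p j + k'' * m j + ((w j : ℕ) : ℤ) - (p j - k' * m j)
        = ((w j : ℕ) : ℤ) + ((k' + k'' : ℕ) : ℤ) * m j := by
      intro j; push_cast; ring
    have hd : ∀ j, (((w j : ℕ) : ℤ) + ((k' + k'' : ℕ) : ℤ) * m j) / ((k' + k'' : ℕ) : ℤ) = m j := by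
      intro j
      rw [Int.add_mul_ediv_left _ _ (by omega), Int.ediv_eq_zero_of_lt (by omega)
        (by have := (w j).2; omega), zero_add]
    have hm : ∀ j, (((w j : ℕ) : ℤ) + ((k' + k'' : ℕ) : ℤ) * m j) % ((k' + k'' : ℕ) : ℤ)
        = ((w j : ℕ) : ℤ) := by
      intro j
      rw [Int.add_mul_emod_self_left, Int.emod_eq_of_lt (by omega)
        (by have := (w j).2; omega)]
    refine Prod.ext ?_ (Prod.ext ?_ ?_)
    · funext j
      apply Fin.ext
      simp only [e, hm, Int.toNat_natCast]
    · funext j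
      simp only [e, hd]
    · funext j
      simp only [e, hd]
      ring
  right_inv := by
    rintro ⟨a, b⟩
    refine Prod.ext ?_ ?_
    · funext j
      have h1 := Int.emod_nonneg (a j - b j) (b := ((k' + k'' : ℕ) : ℤ)) (by omega)
      have h3 := Int.emod_add_mul_ediv (a j - b j) ((k' + k'' : ℕ) : ℤ)
      simp only [Int.toNat_of_nonneg h1]
      push_cast at h3 ⊢
      linarith
    · funext j
      simp

lemma exp_identity {g : ℕ} (k l : ℂ) (τ : Matrix (Fin g) (Fin g) ℂ)
    (a b X S u v : Fin g → ℂ) (ha : ∀ j, a j = S j + l * X j) (hb : ∀ j, b j = S j - k * X j) :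
    Complex.exp ((π : ℂ) * I * qf (k • τ) a + 2 * (π : ℂ) * I * dotc a u)
    * Complex.exp ((π : ℂ) * I * qf (l • τ) b + 2 * (π : ℂ) * I * dotc b v)
    = Complex.exp ((π : ℂ) * I * qf ((k * l * (k + l)) • τ) X
        + 2 * (π : ℂ) * I * dotc X (l • u - k • v))
    * Complex.exp ((π : ℂ) * I * qf ((k + l) • τ) S + 2 * (π : ℂ) * I * dotc S (u + v)) := by
  rw [← Complex.exp_add, ← Complex.exp_add]
  have h1 : qf (k • τ) a + qf (l • τ) b
      = qf ((k * l * (k + l)) • τ) X + qf ((k + l) • τ) S := by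
    simp only [qf, ← Finset.sum_add_distrib]
    refine Finset.sum_congr rfl fun i _ => Finset.sum_congr rfl fun j _ => ?_
    simp only [ha, hb, Matrix.smul_apply, smul_eq_mul]
    ring
  have h2 : dotc a u + dotc b v = dotc X (l • u - k • v) + dotc S (u + v) := by
    simp only [dotc, ← Finset.sum_add_distrib]
    refine Finset.sum_congr rfl fun i _ => ?_
    simp only [ha, hb, Pi.smul_apply, Pi.sub_apply, Pi.add_apply, smul_eq_mul]
    ring
  congr 1
  linear_combination ((π : ℂ) * I) * h1 + 2 * (π : ℂ) * I * h2

/-- the general multiplication formula for shifted theta functions: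
`ϑ[c'/k', d'](k'τ, z') · ϑ[c''/k'', d''](k''τ, z'')
  = ∑_{w ∈ {0,…,k'+k''−1}^g}
      ϑ[(k'k''w + k''c' − k'c'')/(k'k''(k'+k'')), k''d' − k'd''](k'k''(k'+k'')τ, k''z' − k'z'')
      · ϑ[(k'w + c' + c'')/(k'+k''), d' + d'']((k'+k'')τ, z' + z'')`. -/
theorem theta_multiplication_formula (g k' k'' : ℕ)
    (hg : 0 < g) (hk' : 0 < k') (hk'' : 0 < k'')
    (τ : Matrix (Fin g) (Fin g) ℂ) (hτ : τ ∈ Siegel g)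
    (c' d' c'' d'' : Fin g → ℝ) (z' z'' : Fin g → ℂ) :
    thetaS (fun j => c' j / (k' : ℝ)) d' ((k' : ℂ) • τ) z'
      * thetaS (fun j => c'' j / (k'' : ℝ)) d'' ((k'' : ℂ) • τ) z''
    = ∑ w : Fin g → Fin (k' + k''),
        thetaS
          (fun j => ((k' : ℝ) * (k'' : ℝ) * ((w j : ℕ) : ℝ)
              + (k'' : ℝ) * c' j - (k' : ℝ) * c'' j)
            / ((k' : ℝ) * (k'' : ℝ) * ((k' : ℝ) + (k'' : ℝ))))
          (fun j => (k'' : ℝ) * d' j - (k' : ℝ) * d'' j)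
          (((k' : ℂ) * (k'' : ℂ) * ((k' : ℂ) + (k'' : ℂ))) • τ)
          ((k'' : ℂ) • z' - (k' : ℂ) • z'')
        * thetaS
            (fun j => ((k' : ℝ) * ((w j : ℕ) : ℝ) + c' j + c'' j)
              / ((k' : ℝ) + (k'' : ℝ)))
            (fun j => d' j + d'' j)
            (((k' : ℂ) + (k'' : ℂ)) • τ)
            (z' + z'') := by
  have hK : 0 < k' + k'' := by omega
  have hk0 : (k' : ℂ) ≠ 0 := by exact_mod_cast hk'.ne'
  have hl0 : (k'' : ℂ) ≠ 0 := by exact_mod_cast hk''.ne'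
  have hK0 : (k' : ℂ) + (k'' : ℂ) ≠ 0 := by exact_mod_cast hK.ne'
  have s1 := thT_summable (fun j => c' j / (k' : ℝ)) d' ((k' : ℂ) • τ) z'
    (siegel_smul hτ _ k' hk' rfl)
  have s2 := thT_summable (fun j => c'' j / (k'' : ℝ)) d'' ((k'' : ℂ) • τ) z''
    (siegel_smul hτ _ k'' hk'' rfl)
  have hS := summable_mul_of_summable_norm s1 s2
  have hL := tsum_mul_tsum_of_summable_norm s1 s2
  refine hL.trans ?_
  rw [← (latEquiv g k' k'' hK).tsum_eq]
  have hS' := (latEquiv g k' k'' hK).summable_iff.2 hS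
  refine hS'.tsum_prod.trans ?_
  rw [tsum_fintype]
  refine Finset.sum_congr rfl fun w _ => ?_
  refine Eq.trans ?_ (tsum_mul_tsum_of_summable_norm
    (thT_summable _ _ _ _ (siegel_smul hτ _ (k' * k'' * (k' + k'')) (by positivity)
      (by push_cast; rfl)))
    (thT_summable _ _ _ _ (siegel_smul hτ _ (k' + k'') hK (by push_cast; rfl)))).symm
  refine tsum_congr fun p => ?_
  obtain ⟨m, p⟩ := p
  simp only [Function.comp, thT, latEquiv, Equiv.coe_fn_mk]
  refine (exp_identity (k' : ℂ) (k'' : ℂ) τ _ _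
    (fun j => (m j : ℂ) + ((((k' : ℝ) * (k'' : ℝ) * ((w j : ℕ) : ℝ)
              + (k'' : ℝ) * c' j - (k' : ℝ) * c'' j)
            / ((k' : ℝ) * (k'' : ℝ) * ((k' : ℝ) + (k'' : ℝ))) : ℝ) : ℂ))
    (fun j => (p j : ℂ) + ((((k' : ℝ) * ((w j : ℕ) : ℝ) + c' j + c'' j)
              / ((k' : ℝ) + (k'' : ℝ)) : ℝ) : ℂ)) _ _ ?_ ?_).trans ?_
  · intro j
    push_cast
    field_simp
    ring
  · intro j
    push_cast
    field_simp
    ring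
  · have e1 : (k'' : ℂ) • (z' + fun j => (d' j : ℂ)) - (k' : ℂ) • (z'' + fun j => (d'' j : ℂ))
        = ((k'' : ℂ) • z' - (k' : ℂ) • z'')
          + fun j => (((k'' : ℝ) * d' j - (k' : ℝ) * d'' j : ℝ) : ℂ) := by
      funext j
      simp
      ring
    have e2 : (z' + fun j => (d' j : ℂ)) + (z'' + fun j => (d'' j : ℂ))
        = (z' + z'') + fun j => ((d' j + d'' j : ℝ) : ℂ) := by
      funext j
      simp
      ring
    rw [e1, e2]
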